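/- arXiv:2011.10341 — 3 statements merged into one kernel-verified Lean document; each statement's English description precedes it below -/
import Mathlib

section
/- (Theorem 1, recovery-to-efficiency center.) Let E be a real vector space, X ⊆ E a nonempty set of feasible solutions, and d : E → E → ℝ a recovery-cost function such that for every fixed x ∈ X the function y ↦ d(x, y) is quasiconvex on all of E. Let F = {y₁, …, y_m} be a nonempty finite subset of E and let O ⊆ E satisfy F ⊆ O ⊆ convexHull ℝ F. If x* ∈ X minimizes the finite worst-case recovery cost, i.e., max_{i=1,…,m} d(x*, yᵢ) ≤ max_{i=1,…,m} d(x', yᵢ) for all x' ∈ X, then x* also minimizes the worst-case recovery cost over all of O, i.e., sSup ((fun y => d(x*, y)) '' O) ≤ sSup ((fun y => d(x', y)) '' O) for all x' ∈ X. -/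
section Quasiconvex

variable {𝕜 E β : Type*} [Semiring 𝕜] [PartialOrder 𝕜] [AddCommMonoid E] [Module 𝕜 E]
  {s t u : Set E} {f : E → β}

theorem upperBounds_image_eq_of_subset_convexHull [Preorder β] (hf : QuasiconvexOn 𝕜 s f)
    (hts : t ⊆ s) (htu : t ⊆ u) (hut : u ⊆ convexHull 𝕜 t) :
    upperBounds (f '' u) = upperBounds (f '' t) := by
  refine (upperBounds_mono_set (Set.image_mono htu)).antisymm fun b hb ↦ ?_
  have hull_subset_sublevel : convexHull 𝕜 t ⊆ {y ∈ s | f y ≤ b} :=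
    convexHull_min (fun y hy ↦ ⟨hts hy, hb (Set.mem_image_of_mem f hy)⟩) (hf b)
  exact Set.forall_mem_image.2 fun y hy ↦ (hull_subset_sublevel (hut hy)).2

theorem csSup_image_eq_of_subset_convexHull [ConditionallyCompleteLattice β]
    (hf : QuasiconvexOn 𝕜 s f) (hts : t ⊆ s) (htu : t ⊆ u) (hut : u ⊆ convexHull 𝕜 t)
    (ht : t.Nonempty) (hbdd : BddAbove (f '' t)) : sSup (f '' u) = sSup (f '' t) := by
  have hLUB : IsLUB (f '' u) (sSup (f '' t)) :=
    (isLUB_congr (upperBounds_image_eq_of_subset_convexHull hf hts htu hut)).2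
      (isLUB_csSup (ht.image f) hbdd)
  exact hLUB.csSup_eq ((ht.mono htu).image f)

end Quasiconvex

theorem recEff_center_of_finite_center_general
    {𝕜 E ι β : Type*} [Semiring 𝕜] [PartialOrder 𝕜] [AddCommMonoid E] [Module 𝕜 E]
    [ConditionallyCompleteLattice β] {X : Set ι} {d : ι → E → β} {C F O : Set E}
    (hd : ∀ x ∈ X, QuasiconvexOn 𝕜 C (d x)) (hFC : F ⊆ C) (hF : F.Nonempty)
    (hbdd : ∀ x ∈ X, BddAbove (d x '' F)) (hFO : F ⊆ O) (hOF : O ⊆ convexHull 𝕜 F)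
    {xstar : ι} (hxstar : xstar ∈ X) (hmin : IsMinOn (fun x ↦ sSup (d x '' F)) X xstar) :
    IsMinOn (fun x ↦ sSup (d x '' O)) X xstar := by
  have cost_eq : ∀ x ∈ X, sSup (d x '' O) = sSup (d x '' F) := fun x hx ↦
    csSup_image_eq_of_subset_convexHull (hd x hx) hFC hFO hOF hF (hbdd x hx)
  refine isMinOn_iff.2 fun x hx ↦ ?_
  rw [cost_eq xstar hxstar, cost_eq x hx]
  exact isMinOn_iff.1 hmin x hx

/-- Theorem 1 (recovery-to-efficiency center): a minimizer of the finite worst-case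
recovery cost over F also minimizes the worst-case recovery cost over the whole set O,
when F ⊆ O ⊆ convexHull ℝ F and d(x, ·) is quasiconvex for each x ∈ X. -/
theorem recEff_center_of_finite_center
    {E : Type*} [AddCommGroup E] [Module ℝ E]
    (X : Set E) (hX : X.Nonempty)
    (d : E → E → ℝ)
    (hd : ∀ x ∈ X, QuasiconvexOn ℝ (Set.univ : Set E) (fun y => d x y))
    (F : Finset E) (hF : F.Nonempty) (O : Set E)
    (hFO : (F : Set E) ⊆ O) (hOF : O ⊆ convexHull ℝ (F : Set E))
    (xstar : E) (hxstar : xstar ∈ X)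
    (hmin : ∀ x' ∈ X, F.sup' hF (fun y => d xstar y) ≤ F.sup' hF (fun y => d x' y)) :
    ∀ x' ∈ X, sSup ((fun y => d xstar y) '' O) ≤ sSup ((fun y => d x' y) '' O) := by
  simp only [Finset.sup'_eq_csSup_image] at hmin
  exact recEff_center_of_finite_center_general hd (Set.subset_univ _) hF
    (fun x _ ↦ (F.finite_toSet.image (d x)).bddAbove) hFO hOF hxstar hmin
end

section
/- Let E be a real vector space, X ⊆ E a nonempty set, and d : E → E → ℝ such that for every fixed x ∈ X the function y ↦ d(x, y) is quasiconvex on all of E. Let F be a nonempty finite subset of E and let O ⊆ E satisfy F ⊆ O ⊆ convexHull ℝ F. Then the optimal value of the center problem over O equals the optimal value of the center problem over F: ⨅_{x ∈ X} sSup ((fun y => d(x, y)) '' O) = ⨅_{x ∈ X} max_{z ∈ F} d(x, z), where the infima are taken as infima in ℝ over x ∈ X. -/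
section UpperBounds

variable {𝕜 E β : Type*} [Semiring 𝕜] [PartialOrder 𝕜] [AddCommMonoid E] [Module 𝕜 E]
  {C S O : Set E} {f : E → β}

theorem upperBounds_image_convexHull_of_quasiconvexOn [Preorder β]
    (hf : QuasiconvexOn 𝕜 C f) (hSC : S ⊆ C) :
    upperBounds (f '' convexHull 𝕜 S) = upperBounds (f '' S) := by
  refine (upperBounds_mono_set (Set.image_mono (subset_convexHull 𝕜 S))).antisymm ?_
  rintro r hr _ ⟨y, hy, rfl⟩
  have hS_sublevel : S ⊆ {z ∈ C | f z ≤ r} :=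
    fun z hz ↦ ⟨hSC hz, hr (Set.mem_image_of_mem f hz)⟩
  exact (convexHull_min hS_sublevel (hf r) hy).2

theorem upperBounds_image_eq_of_subset_convexHull_s3 [Preorder β]
    (hf : QuasiconvexOn 𝕜 C f) (hSC : S ⊆ C) (hSO : S ⊆ O) (hOS : O ⊆ convexHull 𝕜 S) :
    upperBounds (f '' O) = upperBounds (f '' S) := by
  apply (upperBounds_mono_set (Set.image_mono hSO)).antisymm
  rw [← upperBounds_image_convexHull_of_quasiconvexOn hf hSC]
  exact upperBounds_mono_set (Set.image_mono hOS)

theorem csSup_image_eq_of_subset_convexHull_s3 [ConditionallyCompleteLattice β]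
    (hf : QuasiconvexOn 𝕜 C f) (hSC : S ⊆ C) (hS : S.Nonempty) (hbdd : BddAbove (f '' S))
    (hSO : S ⊆ O) (hOS : O ⊆ convexHull 𝕜 S) :
    sSup (f '' O) = sSup (f '' S) := by
  have hlub : IsLUB (f '' O) (sSup (f '' S)) :=
    (isLUB_congr (upperBounds_image_eq_of_subset_convexHull_s3 hf hSC hSO hOS)).2
      (isLUB_csSup (hS.image f) hbdd)
  exact hlub.csSup_eq ((hS.mono hSO).image f)

end UpperBounds

theorem recEff_center_value_eq_general
    {𝕜 E ι β : Type*} [Semiring 𝕜] [PartialOrder 𝕜] [AddCommMonoid E] [Module 𝕜 E]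
    [ConditionallyCompleteLattice β]
    (X : Set ι) (hX : X.Nonempty) (d : ι → E → β) {C S O : Set E}
    (hd : ∀ x ∈ X, QuasiconvexOn 𝕜 C (d x)) (hSC : S ⊆ C) (hS : S.Nonempty)
    (hbdd : ∀ x ∈ X, BddAbove (d x '' S)) (hSO : S ⊆ O) (hOS : O ⊆ convexHull 𝕜 S) :
    sInf ((fun x ↦ sSup (d x '' O)) '' X) = sInf ((fun x ↦ sSup (d x '' S)) '' X) :=
  congrArg sInf <| Set.image_congr fun x hx ↦
    csSup_image_eq_of_subset_convexHull_s3 (hd x hx) hSC hS (hbdd x hx) hSO hOS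

/-- The optimal value of the center problem over O equals that over the finite set F,
when F ⊆ O ⊆ convexHull ℝ F and d(x, ·) is quasiconvex for each x ∈ X. -/
theorem recEff_center_value_eq
    {E : Type*} [AddCommGroup E] [Module ℝ E]
    (X : Set E) (hX : X.Nonempty)
    (d : E → E → ℝ)
    (hd : ∀ x ∈ X, QuasiconvexOn ℝ (Set.univ : Set E) (fun y => d x y))
    (F : Finset E) (hF : F.Nonempty) (O : Set E)
    (hFO : (F : Set E) ⊆ O) (hOF : O ⊆ convexHull ℝ (F : Set E)) :
    sInf ((fun x => sSup ((fun y => d x y) '' O)) '' X)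
      = sInf ((fun x => F.sup' hF (fun z => d x z)) '' X) := by
  simpa only [Finset.sup'_eq_csSup_image] using recEff_center_value_eq_general X hX d hd
    (Set.subset_univ _) hF (fun x _ ↦ (F.finite_toSet.image (d x)).bddAbove) hFO hOF
end

section
/- (Theorem 2, polytope uncertainty set with affine solution map.) Let V and E be real vector spaces, let ξ¹, …, ξ^m be finitely many points of V (m ≥ 1), and let U = convexHull ℝ {ξ¹, …, ξ^m} be the bounded polyhedral uncertainty set. Let T : V →ᵃ[ℝ] E be an affine map assigning to each scenario ξ ∈ U the (unique) optimal solution T(ξ) of the scalarized problem for that scenario. Let X ⊆ E be a nonempty feasible set and d : E → E → ℝ be such that for every fixed x ∈ X the function y ↦ d(x, y) is quasiconvex on all of E. If x* ∈ X minimizes max_{i=1,…,m} d(x*, T(ξⁱ)) over x ∈ X, then x* also minimizes the worst-case recovery cost over the whole polytope, i.e., sSup ((fun ξ => d(x*, T ξ)) '' U) ≤ sSup ((fun ξ => d(x', T ξ)) '' U) for every x' ∈ X. -/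
/-!
Precomposing with an affine map preserves quasiconvexity, so each recovery cost is quasiconvex in
the scenario. The upper bounds of a quasiconvex function on a set are also upper bounds on its
convex hull, because the sublevel sets are convex. Hence the worst case over the convex hull is
the worst case over the generating scenarios, and the two minimization problems have the same
objective.
-/

open Set

section Quasiconvex

theorem quasiconvexOn_comp_affineMap {𝕜 V E β : Type*} [Ring 𝕜] [PartialOrder 𝕜]
    [AddCommGroup V] [Module 𝕜 V] [AddCommGroup E] [Module 𝕜 E] [LE β]
    {f : E → β} {s : Set E} (hf : QuasiconvexOn 𝕜 s f) (g : V →ᵃ[𝕜] E) :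
    QuasiconvexOn 𝕜 (g ⁻¹' s) (f ∘ g) :=
  fun r => (hf r).affine_preimage g

variable {𝕜 E β : Type*} [Semiring 𝕜] [PartialOrder 𝕜] [AddCommMonoid E] [Module 𝕜 E]
  {f : E → β} {s t : Set E}

theorem upperBounds_image_convexHull [Preorder β] (hf : QuasiconvexOn 𝕜 s f) (hts : t ⊆ s) :
    upperBounds (f '' convexHull 𝕜 t) = upperBounds (f '' t) := by
  refine (upperBounds_mono_set (image_mono (subset_convexHull 𝕜 t))).antisymm fun r hr => ?_
  have ht : t ⊆ {x ∈ s | f x ≤ r} := fun x hx => ⟨hts hx, hr (mem_image_of_mem f hx)⟩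
  have hhull : convexHull 𝕜 t ⊆ {x ∈ s | f x ≤ r} := convexHull_min ht (hf r)
  exact forall_mem_image.2 fun x hx => (hhull hx).2

theorem csSup_image_convexHull [ConditionallyCompleteLattice β] (hf : QuasiconvexOn 𝕜 s f)
    (hts : t ⊆ s) (ht : t.Nonempty) (hbdd : BddAbove (f '' t)) :
    sSup (f '' convexHull 𝕜 t) = sSup (f '' t) := by
  have hlub : IsLUB (f '' convexHull 𝕜 t) (sSup (f '' t)) :=
    (isLUB_congr (upperBounds_image_convexHull hf hts)).2 (isLUB_csSup (ht.image f) hbdd)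
  exact hlub.csSup_eq (ht.convexHull.image f)

theorem csSup_image_convexHull_range [ConditionallyCompleteLattice β] {ι : Type*} [Nonempty ι]
    {x : ι → E} (hf : QuasiconvexOn 𝕜 s f) (hx : ∀ i, x i ∈ s)
    (hbdd : BddAbove (range fun i => f (x i))) :
    sSup (f '' convexHull 𝕜 (range x)) = ⨆ i, f (x i) := by
  have himage : f '' range x = range fun i => f (x i) := (range_comp f x).symm
  rw [csSup_image_convexHull hf (range_subset_iff.2 hx) (range_nonempty x) (himage ▸ hbdd),
    himage, iSup]

end Quasiconvex

theorem recEff_center_polytope_general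
    {𝕜 V E α β ι : Type*} [Ring 𝕜] [PartialOrder 𝕜]
    [AddCommGroup V] [Module 𝕜 V] [AddCommGroup E] [Module 𝕜 E]
    [ConditionallyCompleteLattice β] [Nonempty ι]
    {ξ : ι → V} {T : V →ᵃ[𝕜] E} {C : Set E} (hT : ∀ i, T (ξ i) ∈ C)
    {X : Set α} {d : α → E → β}
    (hd : ∀ x ∈ X, QuasiconvexOn 𝕜 C (d x))
    (hbdd : ∀ x ∈ X, BddAbove (range fun i => d x (T (ξ i))))
    {xstar : α} (hxstar : xstar ∈ X)
    (hmin : ∀ x' ∈ X, ⨆ i, d xstar (T (ξ i)) ≤ ⨆ i, d x' (T (ξ i))) :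
    ∀ x' ∈ X,
      sSup ((fun ζ => d xstar (T ζ)) '' convexHull 𝕜 (range ξ))
        ≤ sSup ((fun ζ => d x' (T ζ)) '' convexHull 𝕜 (range ξ)) := by
  have worst_case_eq : ∀ x ∈ X,
      sSup ((fun ζ => d x (T ζ)) '' convexHull 𝕜 (range ξ)) = ⨆ i, d x (T (ξ i)) := fun x hx =>
    csSup_image_convexHull_range (quasiconvexOn_comp_affineMap (hd x hx) T) hT (hbdd x hx)
  intro x' hx'
  rw [worst_case_eq xstar hxstar, worst_case_eq x' hx']
  exact hmin x' hx'

/-- Theorem 2: polytope uncertainty set with an affine solution map. A minimizer of the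
maximum recovery cost to the solutions of the finitely many generating scenarios also
minimizes the worst-case recovery cost over the whole polytope. -/
theorem recEff_center_polytope
    {V E : Type*} [AddCommGroup V] [Module ℝ V] [AddCommGroup E] [Module ℝ E]
    (m : ℕ) (hm : 0 < m) (ξ : Fin m → V)
    (T : V →ᵃ[ℝ] E)
    (X : Set E) (hX : X.Nonempty)
    (d : E → E → ℝ)
    (hd : ∀ x ∈ X, QuasiconvexOn ℝ (Set.univ : Set E) (fun y => d x y))
    (xstar : E) (hxstar : xstar ∈ X)
    (hmin : ∀ x' ∈ X,
      (Finset.univ : Finset (Fin m)).sup' ⟨⟨0, hm⟩, Finset.mem_univ _⟩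
          (fun i => d xstar (T (ξ i)))
        ≤ (Finset.univ : Finset (Fin m)).sup' ⟨⟨0, hm⟩, Finset.mem_univ _⟩
          (fun i => d x' (T (ξ i)))) :
    ∀ x' ∈ X,
      sSup ((fun ζ => d xstar (T ζ)) '' convexHull ℝ (Set.range ξ))
        ≤ sSup ((fun ζ => d x' (T ζ)) '' convexHull ℝ (Set.range ξ)) := by
  have : Nonempty (Fin m) := Fin.pos_iff_nonempty.1 hm
  exact recEff_center_polytope_general (fun _ => mem_univ _) hd
    (fun _ _ => (finite_range _).bddAbove) hxstar
    (by simpa only [Finset.sup'_univ_eq_ciSup] using hmin)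
end
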